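/- Let v be a real-valued random variable with values in [vmin, vmax] where 0 ≤ vmin < vmax. The function φ(t) := E[max(0, v − t)] − max(0, E[v] − t) is nondecreasing on [vmin, E[v]] and nonincreasing on [E[v], vmax]; hence its maximum over t ∈ [vmin, vmax] is attained at t = E[v] and equals E[max(0, v − E[v])]. -/

import Mathlib

open MeasureTheory Set

/-!
Write `m = E[v]`. For `t ≥ m` the function `φ(t)` is `E[max(0, v - t)]`, and for `t ≤ m` the
identity `max(0, v - t) - max(0, t - v) = v - t` turns it into `E[max(0, t - v)]`. The first
integrand decreases in `t` and the second increases.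
-/

section IntegralPositivePart

variable {Ω : Type*} [MeasurableSpace Ω] {μ : Measure Ω} [IsFiniteMeasure μ] {v : Ω → ℝ}

lemma integrable_max_zero_sub_const (hv : Integrable v μ) (t : ℝ) :
    Integrable (fun ω => max 0 (v ω - t)) μ :=
  (integrable_const 0).sup (hv.sub (integrable_const t))

lemma integrable_max_zero_const_sub (hv : Integrable v μ) (t : ℝ) :
    Integrable (fun ω => max 0 (t - v ω)) μ :=
  (integrable_const 0).sup ((integrable_const t).sub hv)

lemma antitone_integral_max_zero_sub_const (hv : Integrable v μ) :
    Antitone fun t => ∫ ω, max 0 (v ω - t) ∂μ := fun s t hst =>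
  integral_mono (integrable_max_zero_sub_const hv t) (integrable_max_zero_sub_const hv s)
    fun ω => max_le_max_left 0 (sub_le_sub_left hst (v ω))

lemma monotone_integral_max_zero_const_sub (hv : Integrable v μ) :
    Monotone fun t => ∫ ω, max 0 (t - v ω) ∂μ := fun s t hst =>
  integral_mono (integrable_max_zero_const_sub hv s) (integrable_max_zero_const_sub hv t)
    fun ω => max_le_max_left 0 (sub_le_sub_right hst (v ω))

lemma integral_max_zero_sub_const_sub_integral_max_zero_const_sub (hv : Integrable v μ) (t : ℝ) :
    (∫ ω, max 0 (v ω - t) ∂μ) - ∫ ω, max 0 (t - v ω) ∂μ = ∫ ω, (v ω - t) ∂μ := by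
  rw [← integral_sub (integrable_max_zero_sub_const hv t) (integrable_max_zero_const_sub hv t)]
  congr with ω
  rw [max_comm 0, max_comm 0, ← neg_sub (v ω) t, max_zero_sub_max_neg_zero_eq_self]

end IntegralPositivePart

section NetUtility

variable {Ω : Type*} [MeasurableSpace Ω]

/-- The function `φ` of the theorem: the expected gain from learning `v` before choosing between
`v` and an outside option of value `t`, over choosing on the basis of the mean of `v` alone. -/
noncomputable def netUtility (μ : Measure Ω) (v : Ω → ℝ) (t : ℝ) : ℝ :=
  (∫ ω, max 0 (v ω - t) ∂μ) - max 0 ((∫ ω, v ω ∂μ) - t)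

variable {μ : Measure Ω} {v : Ω → ℝ} {t : ℝ}

lemma netUtility_of_integral_le (ht : ∫ ω, v ω ∂μ ≤ t) :
    netUtility μ v t = ∫ ω, max 0 (v ω - t) ∂μ := by
  rw [netUtility, max_eq_left (sub_nonpos.2 ht), sub_zero]

lemma antitoneOn_netUtility [IsFiniteMeasure μ] (hv : Integrable v μ) :
    AntitoneOn (netUtility μ v) (Ici (∫ ω, v ω ∂μ)) :=
  ((antitone_integral_max_zero_sub_const hv).antitoneOn _).congr
    fun _ ht => (netUtility_of_integral_le ht).symm

variable [IsProbabilityMeasure μ]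

lemma netUtility_of_le_integral (hv : Integrable v μ) (ht : t ≤ ∫ ω, v ω ∂μ) :
    netUtility μ v t = ∫ ω, max 0 (t - v ω) ∂μ := by
  have mean_sub : ∫ ω, (v ω - t) ∂μ = (∫ ω, v ω ∂μ) - t := by
    rw [integral_sub hv (integrable_const t), integral_const, probReal_univ, one_smul]
  rw [netUtility, max_eq_right (sub_nonneg.2 ht), ← mean_sub,
    ← integral_max_zero_sub_const_sub_integral_max_zero_const_sub hv t, sub_sub_cancel]

lemma monotoneOn_netUtility (hv : Integrable v μ) :
    MonotoneOn (netUtility μ v) (Iic (∫ ω, v ω ∂μ)) :=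
  ((monotone_integral_max_zero_const_sub hv).monotoneOn _).congr
    fun _ ht => (netUtility_of_le_integral hv ht).symm

lemma netUtility_le_netUtility_integral (hv : Integrable v μ) (t : ℝ) :
    netUtility μ v t ≤ netUtility μ v (∫ ω, v ω ∂μ) := by
  rcases le_total t (∫ ω, v ω ∂μ) with ht | ht
  · exact monotoneOn_netUtility hv ht self_mem_Iic ht
  · exact antitoneOn_netUtility hv self_mem_Ici ht ht

theorem net_utility_unimodal_general (hv : Integrable v μ) :
    MonotoneOn (netUtility μ v) (Iic (∫ ω, v ω ∂μ)) ∧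
    AntitoneOn (netUtility μ v) (Ici (∫ ω, v ω ∂μ)) ∧
    (∀ t, netUtility μ v t ≤ netUtility μ v (∫ ω, v ω ∂μ)) ∧
    netUtility μ v (∫ ω, v ω ∂μ) = ∫ ω, max 0 (v ω - ∫ ω', v ω' ∂μ) ∂μ :=
  ⟨monotoneOn_netUtility hv, antitoneOn_netUtility hv, netUtility_le_netUtility_integral hv,
    netUtility_of_integral_le le_rfl⟩

end NetUtility

/-- The function `φ(t) := E[max(0, v − t)] − max(0, E[v] − t)` is nondecreasing
on `[vmin, E[v]]` and nonincreasing on `[E[v], vmax]`; hence its maximum over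
`t ∈ [vmin, vmax]` is attained at `t = E[v]` and equals `E[max(0, v − E[v])]`. -/
theorem net_utility_unimodal
    {Ω : Type*} [MeasurableSpace Ω] (μ : Measure Ω) [IsProbabilityMeasure μ]
    (vmin vmax : ℝ) (h0 : 0 ≤ vmin) (h1 : vmin < vmax)
    (v : Ω → ℝ) (hv : ∀ ω, v ω ∈ Icc vmin vmax) (hmv : Measurable v)
    (φ : ℝ → ℝ)
    (hφ : φ = fun t => (∫ ω, max 0 (v ω - t) ∂μ) - max 0 ((∫ ω, v ω ∂μ) - t)) :
    MonotoneOn φ (Icc vmin (∫ ω, v ω ∂μ)) ∧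
    AntitoneOn φ (Icc (∫ ω, v ω ∂μ) vmax) ∧
    (∀ t ∈ Icc vmin vmax, φ t ≤ φ (∫ ω, v ω ∂μ)) ∧
    φ (∫ ω, v ω ∂μ) = ∫ ω, max 0 (v ω - ∫ ω', v ω' ∂μ) ∂μ := by
  obtain rfl : φ = netUtility μ v := hφ
  have v_integrable : Integrable v μ :=
    .of_mem_Icc vmin vmax hmv.aemeasurable (.of_forall hv)
  obtain ⟨mono, anti, le_max, max_eq⟩ := net_utility_unimodal_general v_integrable
  exact ⟨mono.mono Icc_subset_Iic_self, anti.mono Icc_subset_Ici_self, fun t _ => le_max t, max_eq⟩
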